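/- arXiv:2212.01115 — 2 statements merged into one kernel-verified Lean document; each statement's English description precedes it below -/
import Mathlib

section
/- Let m ≥ 2 and n ≥ 1, and let A1, A2 be m-order n-dimensional real tensors. The pair Ã = {A1, A2} is of type VR0 if and only if for all q1, q2 ∈ ℝⁿ, all t > 0 and all s ∈ ℝ, the set τ(q1, q2, s, t) = {x ∈ ℝⁿ : q1 + A1 x^{m-1} ≥ 0, q2 + A2 x^{m-1} ≥ 0, (q1 + A1 x^{m-1})ᵀ(q2 + t·A2 x^{m-1}) ≤ s} is bounded. -/
open Finset

/-- For an `m`-order `n`-dimensional real tensor `A` (the first index separated, the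
remaining `m-1` indices given as a function `Fin (m-1) → Fin n`),
`tProd A x i = (A x^{m-1})_i = ∑_{i2,…,im} a_{i i2 ⋯ im} x_{i2} ⋯ x_{im}`. -/
noncomputable def tProd {n k : ℕ} (A : Fin n → (Fin k → Fin n) → ℝ)
    (x : Fin n → ℝ) : Fin n → ℝ :=
  fun i => ∑ f : Fin k → Fin n, A i f * ∏ j, x (f j)

theorem tProd_smul' {n k : ℕ} (A : Fin n → (Fin k → Fin n) → ℝ) (c : ℝ) (x : Fin n → ℝ)
    (i : Fin n) : tProd A (c • x) i = c ^ k * tProd A x i := by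
  simp only [tProd, Pi.smul_apply, smul_eq_mul, Finset.prod_mul_distrib, Finset.prod_const,
    Finset.card_univ, Fintype.card_fin, Finset.mul_sum]
  exact Finset.sum_congr rfl fun f _ => by ring

theorem tProd_cont {n k : ℕ} (A : Fin n → (Fin k → Fin n) → ℝ) (i : Fin n) :
    Continuous fun x : Fin n → ℝ => tProd A x i := by
  unfold tProd
  fun_prop

theorem stmt_8 {m n : ℕ} (hm : 2 ≤ m) (hn : 1 ≤ n)
    (A1 A2 : Fin n → (Fin (m - 1) → Fin n) → ℝ) :
    (∀ x : Fin n → ℝ, (∀ i, min (tProd A1 x i) (tProd A2 x i) = 0) → x = 0) ↔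
      ∀ (q1 q2 : Fin n → ℝ) (t s : ℝ), 0 < t →
        Bornology.IsBounded {x : Fin n → ℝ |
          (∀ i, 0 ≤ q1 i + tProd A1 x i) ∧ (∀ i, 0 ≤ q2 i + tProd A2 x i) ∧
          ∑ i, (q1 i + tProd A1 x i) * (q2 i + t * tProd A2 x i) ≤ s} := by
  have hk : m - 1 ≠ 0 := by omega
  generalize m - 1 = k at *
  have c1 := tProd_cont A1
  have c2 := tProd_cont A2
  constructor
  · intro h q1 q2 t s ht
    let K : Set ((Fin n → ℝ) × ℝ) := (Metric.sphere 0 1 ×ˢ Set.Icc 0 1) ∩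
      {p | (∀ i, 0 ≤ p.2 * q1 i + tProd A1 p.1 i) ∧ (∀ i, 0 ≤ p.2 * q2 i + tProd A2 p.1 i) ∧
        ∑ i, (p.2 * q1 i + tProd A1 p.1 i) * (p.2 * q2 i + t * tProd A2 p.1 i) ≤ s * p.2 ^ 2}
    have d1 : ∀ i, Continuous fun p : (Fin n → ℝ) × ℝ => tProd A1 p.1 i :=
      fun i => (c1 i).comp continuous_fst
    have d2 : ∀ i, Continuous fun p : (Fin n → ℝ) × ℝ => tProd A2 p.1 i :=
      fun i => (c2 i).comp continuous_fst
    have hK : IsCompact K := by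
      refine ((isCompact_sphere _ _).prod isCompact_Icc).inter_right ?_
      simp only [Set.setOf_and, Set.setOf_forall]
      refine (isClosed_iInter fun i => isClosed_le (by fun_prop) ?_).inter
        ((isClosed_iInter fun i => isClosed_le (by fun_prop) ?_).inter
          (isClosed_le ?_ (by fun_prop)))
      · have := d1 i
        fun_prop
      · have := d2 i
        fun_prop
      · fun_prop
    obtain ⟨δ, hδ, hle⟩ := hK.exists_forall_le' (f := Prod.snd) (a := 0)
      continuous_snd.continuousOn (by
        rintro ⟨y, e⟩ ⟨⟨hy, he⟩, h1, h2, h3⟩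
        simp only at hy he h1 h2 h3 ⊢
        refine lt_of_le_of_ne he.1 ?_
        rintro rfl
        simp only [zero_mul, zero_add] at h1 h2 h3
        have hnn : ∀ i ∈ Finset.univ, 0 ≤ tProd A1 y i * (t * tProd A2 y i) := fun i _ =>
          mul_nonneg (h1 i) (mul_nonneg ht.le (h2 i))
        have h0 := (Finset.sum_eq_zero_iff_of_nonneg hnn).1
          (le_antisymm (by simpa using h3) (Finset.sum_nonneg hnn))
        have : y = 0 := h y fun i => by
          have := h0 i (Finset.mem_univ i)
          rcases mul_eq_zero.1 this with h' | h'
          · rw [h']; exact min_eq_left (h2 i)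
          · rcases mul_eq_zero.1 h' with h' | h'
            · exact absurd h' ht.ne'
            · rw [h']; exact min_eq_right (h1 i)
        subst this
        simp at hy)
    refine isBounded_iff_forall_norm_le.2 ⟨max 1 δ⁻¹, ?_⟩
    rintro x ⟨h1, h2, h3⟩
    rcases le_total ‖x‖ 1 with hx | hx
    · exact hx.trans (le_max_left _ _)
    refine le_trans ?_ (le_max_right _ _)
    have hx0 : 0 < ‖x‖ := by linarith
    have he : 0 < ‖x‖⁻¹ ^ k := by positivity
    have := hle (‖x‖⁻¹ • x, ‖x‖⁻¹ ^ k) (by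
      refine ⟨⟨?_, he.le, pow_le_one₀ (by positivity) (inv_le_one_of_one_le₀ hx)⟩, ?_, ?_, ?_⟩
      · simp [norm_smul, hx0.ne']
      · intro i
        simp only [tProd_smul', ← mul_add]
        exact mul_nonneg he.le (h1 i)
      · intro i
        simp only [tProd_smul', ← mul_add]
        exact mul_nonneg he.le (h2 i)
      · simp only [tProd_smul']
        calc _ = (‖x‖⁻¹ ^ k) ^ 2 *
              ∑ i, (q1 i + tProd A1 x i) * (q2 i + t * tProd A2 x i) := by
              rw [Finset.mul_sum]
              exact Finset.sum_congr rfl fun i _ => by ring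
          _ ≤ (‖x‖⁻¹ ^ k) ^ 2 * s := by gcongr
          _ = _ := by ring)
    simp only [inv_pow] at this
    have h4 : ‖x‖ ^ k ≤ δ⁻¹ := (le_inv_comm₀ hδ (by positivity)).1 this
    exact (le_self_pow₀ hx hk).trans h4
  · intro h x hx
    by_contra hne
    obtain ⟨C, hC⟩ := isBounded_iff_forall_norm_le.1 (h 0 0 1 0 one_pos)
    have hx0 : 0 < ‖x‖ := norm_pos_iff.2 hne
    have hc : 0 ≤ (|C| + 1) / ‖x‖ := by positivity
    have := hC (((|C| + 1) / ‖x‖) • x) (by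
      have g1 : ∀ i, 0 ≤ tProd A1 x i := fun i => (hx i).symm.le.trans (min_le_left _ _)
      have g2 : ∀ i, 0 ≤ tProd A2 x i := fun i => (hx i).symm.le.trans (min_le_right _ _)
      refine ⟨fun i => ?_, fun i => ?_, le_of_eq (Finset.sum_eq_zero fun i _ => ?_)⟩
      · simp only [tProd_smul', Pi.zero_apply, zero_add]
        exact mul_nonneg (pow_nonneg hc _) (g1 i)
      · simp only [tProd_smul', Pi.zero_apply, zero_add]
        exact mul_nonneg (pow_nonneg hc _) (g2 i)
      · simp only [tProd_smul', Pi.zero_apply, zero_add]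
        have hi := hx i
        rcases min_choice (tProd A1 x i) (tProd A2 x i) with h' | h' <;> rw [h'] at hi <;>
          simp [hi])
    rw [norm_smul, Real.norm_of_nonneg hc, div_mul_cancel₀ _ hx0.ne'] at this
    linarith [le_abs_self C]
end

section
/- Let m > 2 and n ≥ 1, and let A1, A2 be m-order n-dimensional real tensors. If the pair Ã = {A1, A2} is of type strong VP and A2 is an R-tensor, then for all q1, q2 ∈ ℝⁿ the vertical tensor complementarity problem VTCP(Ã, q̃) has a unique solution. -/
open Finset

/-- The pair `{A1, A2}` is of type strong VP: for all `x ≠ y`,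
`max_i (A1 x^{m-1} − A1 y^{m-1})_i (A2 x^{m-1} − A2 y^{m-1})_i > 0`. -/
def StrongVP {n k : ℕ} (A1 A2 : Fin n → (Fin k → Fin n) → ℝ) : Prop :=
  ∀ x y : Fin n → ℝ, x ≠ y → ∃ i,
    0 < (tProd A1 x i - tProd A1 y i) * (tProd A2 x i - tProd A2 y i)

/-- `A` is an R-tensor: there is no `x ≥ 0`, `x ≠ 0` and `t ≥ 0` such that
`(A x^{m-1})_i + t = 0` whenever `x_i > 0` and `(A x^{m-1})_j + t ≥ 0` whenever `x_j = 0`. -/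
def RTensor {n k : ℕ} (A : Fin n → (Fin k → Fin n) → ℝ) : Prop :=
  ¬ ∃ (x : Fin n → ℝ) (t : ℝ), (∀ i, 0 ≤ x i) ∧ x ≠ 0 ∧ 0 ≤ t ∧
    (∀ i, 0 < x i → tProd A x i + t = 0) ∧ (∀ j, x j = 0 → 0 ≤ tProd A x j + t)

/-- `x` solves the vertical tensor complementarity problem VTCP({A1,A2},{q1,q2}):
`q1 + A1 x^{m-1} ≥ 0`, `q2 + A2 x^{m-1} ≥ 0`, and
`(q1 + A1 x^{m-1})ᵀ (q2 + A2 x^{m-1}) = 0`. -/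
def VTCPSol {n k : ℕ} (A1 A2 : Fin n → (Fin k → Fin n) → ℝ)
    (q1 q2 x : Fin n → ℝ) : Prop :=
  (∀ i, 0 ≤ q1 i + tProd A1 x i) ∧ (∀ i, 0 ≤ q2 i + tProd A2 x i) ∧
    ∑ i, (q1 i + tProd A1 x i) * (q2 i + tProd A2 x i) = 0

section Brouwer
open MeasureTheory Polynomial

variable {E : Type*} [NormedAddCommGroup E] [InnerProductSpace ℝ E] [FiniteDimensional ℝ E]
  [MeasurableSpace E] [BorelSpace E]

theorem aux_det_poly {E : Type*} [NormedAddCommGroup E] [InnerProductSpace ℝ E]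
    [FiniteDimensional ℝ E] (A : E →L[ℝ] E) :
    ∃ p : ℝ[X], p.natDegree ≤ Module.finrank ℝ E ∧
      ∀ t : ℝ, p.eval t = (ContinuousLinearMap.id ℝ E + t • A).det := by
  classical
  let b := Module.finBasis ℝ E
  let M := LinearMap.toMatrix b b (A : E →ₗ[ℝ] E)
  refine ⟨((X : ℝ[X]) • M.map C + (1 : Matrix _ _ ℝ).map C).det, ?_, ?_⟩
  · simpa using Polynomial.natDegree_det_X_add_C_le M 1
  · intro t
    have h1 : (ContinuousLinearMap.id ℝ E + t • A).det
        = (LinearMap.toMatrix b b (LinearMap.id + t • (A : E →ₗ[ℝ] E))).det := by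
      rw [LinearMap.det_toMatrix]; rfl
    rw [h1, ← coe_evalRingHom, RingHom.map_det]
    congr 1
    ext i j
    simp [M, Matrix.one_apply, add_comm]
    split_ifs <;> simp [mul_comm]

theorem aux_interp (D : ℕ) (t0 : ℝ) (ht0 : 0 < t0) :
    ∃ (v w : ℕ → ℝ), (∀ i, 0 < v i ∧ v i ≤ t0) ∧
      ∀ p : ℝ[X], p.natDegree ≤ D →
        p.eval 1 = ∑ i ∈ Finset.range (D + 1), w i * p.eval (v i) := by
  let v : ℕ → ℝ := fun i => t0 / (i + 1)
  have hinj : Set.InjOn v (Finset.range (D + 1)) := by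
    intro i _ j _ hij
    simp only [v] at hij
    field_simp at hij
    exact_mod_cast (by linarith : (i : ℝ) = j)
  refine ⟨v, fun i => (Lagrange.basis (Finset.range (D + 1)) v i).eval 1, ?_, ?_⟩
  · intro i
    refine ⟨by positivity, ?_⟩
    apply div_le_self ht0.le
    have : (0 : ℝ) ≤ i := by positivity
    linarith
  · intro p hp
    have hd : p.degree < ((Finset.range (D + 1)).card : WithBot ℕ) := by
      rw [Finset.card_range]
      refine lt_of_le_of_lt (degree_le_of_natDegree_le hp) ?_
      exact_mod_cast Nat.lt_succ_self D
    conv_lhs => rw [Lagrange.eq_interpolate hinj hd, Lagrange.interpolate_apply, eval_finsetSum]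
    simp [mul_comm]

theorem aux_small (h : E → E) (hh : ContDiff ℝ 1 h) (R : ℝ) 
    (hR : ∀ x, R ≤ ‖x‖ → h x = 0) :
    ∃ t0 : ℝ, 0 < t0 ∧ ∀ t : ℝ, 0 < t → t ≤ t0 → ∀ φ : E → ℝ,
      ∫ x in Metric.closedBall (0 : E) R,
        (ContinuousLinearMap.id ℝ E + t • fderiv ℝ h x).det * φ (x + t • h x)
      = ∫ x in Metric.closedBall (0 : E) R, φ x := by
  have hcs : HasCompactSupport h := by
    apply HasCompactSupport.intro (isCompact_closedBall (0 : E) R)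
    intro x hx
    apply hR
    simp at hx
    exact hx.le
  obtain ⟨L, hL⟩ := hh.lipschitzWith_of_hasCompactSupport hcs one_ne_zero
  have hdet : ∀ᶠ A : E →L[ℝ] E in nhds 0, 0 < (ContinuousLinearMap.id ℝ E + A).det := by
    have hc : Continuous fun A : E →L[ℝ] E => (ContinuousLinearMap.id ℝ E + A).det :=
      ContinuousLinearMap.continuous_det.comp (continuous_const.add continuous_id)
    apply hc.continuousAt.eventually_mem
    apply lt_mem_nhds
    have : (ContinuousLinearMap.id ℝ E).det = 1 := LinearMap.det_id
    simp [this]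
  obtain ⟨ρ, hρ, hρ'⟩ := Metric.eventually_nhds_iff.1 hdet
  refine ⟨min (1 / (2 * (L + 1))) (ρ / (2 * (L + 1))), by positivity, ?_⟩
  intro t ht htt φ
  have hL0 : (0 : ℝ) ≤ L := L.2
  have ht1 : t * L < 1 := by
    have := htt.trans (min_le_left _ _)
    rw [le_div_iff₀ (by positivity)] at this
    nlinarith
  have ht2 : t * L < ρ := by
    have := htt.trans (min_le_right _ _)
    rw [le_div_iff₀ (by positivity)] at this
    nlinarith
  have hpos : ∀ x, 0 < (ContinuousLinearMap.id ℝ E + t • fderiv ℝ h x).det := by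
    intro x
    apply hρ'
    rw [dist_zero_right, norm_smul, Real.norm_of_nonneg ht.le]
    exact lt_of_le_of_lt (mul_le_mul_of_nonneg_left (norm_fderiv_le_of_lipschitz ℝ hL) ht.le) ht2
  set F : E → E := fun x => x + t • h x with hF
  have happ : ApproximatesLinearOn F ((ContinuousLinearEquiv.refl ℝ E : E ≃L[ℝ] E) : E →L[ℝ] E) Set.univ
      (t.toNNReal * L) := by
    intro x _ y _
    have : F x - F y - ((ContinuousLinearEquiv.refl ℝ E : E ≃L[ℝ] E) : E →L[ℝ] E) (x - y)
      = t • (h x - h y) := by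
      simp [F, smul_sub]; abel
    rw [this, norm_smul, Real.norm_of_nonneg ht.le]
    rw [NNReal.coe_mul, Real.coe_toNNReal t ht.le, mul_assoc]
    exact mul_le_mul_of_nonneg_left (hL.norm_sub_le x y) ht.le
  have hlt : Subsingleton E ∨ (t.toNNReal * L : NNReal) <
      ‖((ContinuousLinearEquiv.refl ℝ E : E ≃L[ℝ] E).symm : E →L[ℝ] E)‖₊⁻¹ := by
    rcases subsingleton_or_nontrivial E with h | h
    · exact Or.inl h
    · right
      have : ‖((ContinuousLinearEquiv.refl ℝ E : E ≃L[ℝ] E).symm : E →L[ℝ] E)‖₊ = 1 := by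
        ext
        simp
      rw [this, inv_one, ← NNReal.coe_lt_coe, NNReal.coe_mul, Real.coe_toNNReal t ht.le]
      exact ht1
  have hsurj : Function.Surjective F := happ.surjective hlt
  have hinj : Function.Injective F := by
    have := happ.injective hlt
    intro x y hxy
    exact congrArg Subtype.val (@this ⟨x, trivial⟩ ⟨y, trivial⟩ hxy)
  have hout : ∀ x, R ≤ ‖x‖ → F x = x := by
    intro x hx; simp [F, hR x hx]
  have himg : F '' Metric.closedBall 0 R = Metric.closedBall 0 R := by
    apply Set.Subset.antisymm
    · rintro _ ⟨x, hx, rfl⟩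
      by_contra hc
      have h1 : R ≤ ‖F x‖ := by simp at hc; exact hc.le
      have h2 := hinj (hout _ h1)
      rw [h2] at hc
      exact hc hx
    · intro y hy
      obtain ⟨x, rfl⟩ := hsurj y
      by_contra hc
      have hx : x ∉ Metric.closedBall (0 : E) R := fun hx => hc ⟨x, hx, rfl⟩
      have h1 : R ≤ ‖x‖ := by simp at hx; exact hx.le
      rw [hout x h1] at hy
      exact hx hy
  have hcv := integral_image_eq_integral_abs_det_fderiv_smul (volume : Measure E)
    (s := Metric.closedBall (0 : E) R) (f := F)
    (f' := fun x => ContinuousLinearMap.id ℝ E + t • fderiv ℝ h x)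
    Metric.isClosed_closedBall.measurableSet
    (fun x _ => ((hasFDerivAt_id x).add
      (((hh.differentiable one_ne_zero) x).hasFDerivAt.const_smul t)).hasFDerivWithinAt)
    hinj.injOn φ
  rw [himg] at hcv
  rw [hcv]
  congr 1
  ext x
  rw [abs_of_pos (hpos x), smul_eq_mul]

theorem aux_one (h : E → E) (hh : ContDiff ℝ 1 h) (R : ℝ) 
    (hR : ∀ x, R ≤ ‖x‖ → h x = 0) (M : ℝ) (N : ℕ) :
      ∫ x in Metric.closedBall (0 : E) R,
        (ContinuousLinearMap.id ℝ E + fderiv ℝ h x).det * (M - ‖x + h x‖ ^ 2) ^ N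
      = ∫ x in Metric.closedBall (0 : E) R, (M - ‖x‖ ^ 2) ^ N := by
  obtain ⟨t0, ht0, hsm⟩ := aux_small h hh R hR
  obtain ⟨v, w, hv, hw⟩ := aux_interp (Module.finrank ℝ E + N * 2) t0 ht0
  have hpoly : ∀ x, ∃ p : ℝ[X], p.natDegree ≤ Module.finrank ℝ E + N * 2 ∧ ∀ t : ℝ,
      p.eval t = (ContinuousLinearMap.id ℝ E + t • fderiv ℝ h x).det *
        (M - ‖x + t • h x‖ ^ 2) ^ N := by
    intro x
    obtain ⟨p, hp, hp'⟩ := aux_det_poly (fderiv ℝ h x)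
    refine ⟨p * (C (M - ‖x‖ ^ 2) + C (- (2 * inner ℝ x (h x))) * X + C (- ‖h x‖ ^ 2) * X ^ 2) ^ N,
      ?_, ?_⟩
    · refine natDegree_mul_le.trans (add_le_add hp ?_)
      refine natDegree_pow_le.trans (Nat.mul_le_mul_left _ ?_)
      compute_degree
    · intro t
      rw [eval_mul, hp']
      congr 1
      rw [norm_add_sq_real, norm_smul, inner_smul_right, mul_pow, Real.norm_eq_abs, sq_abs]
      simp
      ring
  have hcont : ∀ t : ℝ, Continuous fun x => (ContinuousLinearMap.id ℝ E + t • fderiv ℝ h x).det *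
        (M - ‖x + t • h x‖ ^ 2) ^ N := by
    intro t
    have h1 : Continuous (fderiv ℝ h) := hh.continuous_fderiv one_ne_zero
    have h2 : Continuous h := hh.continuous
    have h3 := ContinuousLinearMap.continuous_det (𝕜 := ℝ) (E := E)
    refine Continuous.mul (h3.comp (continuous_const.add (h1.const_smul t))) ?_
    fun_prop
  have hint : ∀ t : ℝ, IntegrableOn (fun x => (ContinuousLinearMap.id ℝ E + t • fderiv ℝ h x).det *
        (M - ‖x + t • h x‖ ^ 2) ^ N) (Metric.closedBall (0 : E) R) := fun t =>
    (hcont t).continuousOn.integrableOn_compact (isCompact_closedBall _ _)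
  have hpt : ∀ x, (ContinuousLinearMap.id ℝ E + fderiv ℝ h x).det * (M - ‖x + h x‖ ^ 2) ^ N
      = ∑ i ∈ Finset.range (Module.finrank ℝ E + N * 2 + 1), w i *
        ((ContinuousLinearMap.id ℝ E + v i • fderiv ℝ h x).det *
        (M - ‖x + v i • h x‖ ^ 2) ^ N) := by
    intro x
    obtain ⟨p, hp, hp'⟩ := hpoly x
    have := hw p hp
    simpa only [hp', one_smul] using this
  simp_rw [hpt]
  rw [integral_finsetSum _ (fun i _ => (hint (v i)).const_mul (w i))]
  simp_rw [integral_const_mul]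
  have hone := hw 1 (by simp)
  simp only [eval_one, mul_one] at hone
  rw [Finset.sum_congr rfl (fun i _ => by
    rw [hsm (v i) (hv i).1 (hv i).2 (fun y => (M - ‖y‖ ^ 2) ^ N)]), ← Finset.sum_mul, ← hone, one_mul]


theorem aux_zero (h : E → E) (hh : ContDiff ℝ 1 h) (R : ℝ) (hR0 : 0 < R)
    (hR : ∀ x, R ≤ ‖x‖ → h x = 0) : ∃ x, x + h x = 0 := by
  by_contra! hne
  have hc : Continuous h := hh.continuous
  have hcF : Continuous fun x => ‖x + h x‖ := by fun_prop
  have hB : IsCompact (Metric.closedBall (0 : E) R) := isCompact_closedBall _ _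
  have hBne : (Metric.closedBall (0 : E) R).Nonempty := ⟨0, by simp [hR0.le]⟩
  obtain ⟨x0, -, hx0⟩ := hB.exists_isMinOn hBne hcF.continuousOn
  obtain ⟨x1, -, hx1⟩ := hB.exists_isMaxOn hBne hcF.continuousOn
  have hcd : Continuous fun x => |(ContinuousLinearMap.id ℝ E + fderiv ℝ h x).det| :=
    ((ContinuousLinearMap.continuous_det (𝕜 := ℝ) (E := E)).comp
      (continuous_const.add (hh.continuous_fderiv one_ne_zero))).abs
  obtain ⟨x2, -, hx2⟩ := hB.exists_isMaxOn hBne hcd.continuousOn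
  set C := |(ContinuousLinearMap.id ℝ E + fderiv ℝ h x2).det|
  set δ := min ‖x0 + h x0‖ R with hδ
  have hδ0 : 0 < δ := lt_min (norm_pos_iff.2 (hne x0)) hR0
  set M := ‖x1 + h x1‖ ^ 2 + R ^ 2 + 1 with hM
  have hδR : δ ^ 2 ≤ R ^ 2 := pow_le_pow_left₀ hδ0.le (min_le_right _ _) 2
  set a := M - δ ^ 2 with ha
  set b := M - δ ^ 2 / 4 with hb
  have ha0 : 0 ≤ a := by
    have := sq_nonneg ‖x1 + h x1‖
    linarith
  have hab : a < b := by
    have : 0 < δ ^ 2 := by positivity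
    linarith
  set V := volume.real (Metric.closedBall (0 : E) R)
  set v := volume.real (Metric.closedBall (0 : E) (δ / 2))
  have hv : 0 < v := by
    apply ENNReal.toReal_pos
    · exact (Metric.measure_closedBall_pos volume 0 (by positivity)).ne'
    · exact measure_closedBall_lt_top.ne
  have key : ∀ N : ℕ, v * b ^ N ≤ C * V * a ^ N := by
    intro N
    have h1 := aux_one h hh R hR M N
    have hle : ‖∫ x in Metric.closedBall (0 : E) R,
        (ContinuousLinearMap.id ℝ E + fderiv ℝ h x).det * (M - ‖x + h x‖ ^ 2) ^ N‖
        ≤ (C * a ^ N) * V := by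
      apply norm_setIntegral_le_of_norm_le_const measure_closedBall_lt_top
      intro x hx
      rw [norm_mul]
      have e1 : ‖x + h x‖ ≤ ‖x1 + h x1‖ := hx1 hx
      have e2 : δ ≤ ‖x + h x‖ := (min_le_left _ _).trans (hx0 hx)
      have e3 : ‖x + h x‖ ^ 2 ≤ ‖x1 + h x1‖ ^ 2 := pow_le_pow_left₀ (norm_nonneg _) e1 2
      have e4 : δ ^ 2 ≤ ‖x + h x‖ ^ 2 := pow_le_pow_left₀ hδ0.le e2 2
      have e5 : 0 ≤ M - ‖x + h x‖ ^ 2 := by nlinarith [sq_nonneg R]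
      apply mul_le_mul (hx2 hx) _ (norm_nonneg _) (abs_nonneg _)
      rw [Real.norm_of_nonneg (pow_nonneg e5 N)]
      exact pow_le_pow_left₀ e5 (by linarith) N
    have hge : v * b ^ N ≤ ∫ x in Metric.closedBall (0 : E) R, (M - ‖x‖ ^ 2) ^ N := by
      have hcN : Continuous fun x : E => (M - ‖x‖ ^ 2) ^ N := by fun_prop
      have hsub : Metric.closedBall (0 : E) (δ / 2) ⊆ Metric.closedBall (0 : E) R := by
        apply Metric.closedBall_subset_closedBall
        have : δ ≤ R := min_le_right _ _
        linarith
      calc v * b ^ N = ∫ x in Metric.closedBall (0 : E) (δ / 2), b ^ N := by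
            simp [v]
        _ ≤ ∫ x in Metric.closedBall (0 : E) (δ / 2), (M - ‖x‖ ^ 2) ^ N := by
            apply setIntegral_mono_on
            · exact continuous_const.continuousOn.integrableOn_compact (isCompact_closedBall _ _)
            · exact hcN.continuousOn.integrableOn_compact (isCompact_closedBall _ _)
            · exact Metric.isClosed_closedBall.measurableSet
            · intro x hx
              apply pow_le_pow_left₀ (by linarith)
              have : ‖x‖ ≤ δ / 2 := by simpa using hx
              have := pow_le_pow_left₀ (norm_nonneg x) this 2
              rw [hb]; nlinarith
        _ ≤ _ := by
            apply setIntegral_mono_set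
            · exact hcN.continuousOn.integrableOn_compact (isCompact_closedBall _ _)
            · refine (ae_restrict_iff' Metric.isClosed_closedBall.measurableSet).2
                (Filter.Eventually.of_forall fun x hx => ?_)
              have : ‖x‖ ≤ R := by simpa using hx
              have := pow_le_pow_left₀ (norm_nonneg x) this 2
              apply pow_nonneg
              nlinarith [sq_nonneg ‖x1 + h x1‖]
            · exact hsub.eventuallyLE
    rw [← h1] at hge
    calc _ ≤ _ := hge
      _ ≤ _ := le_abs_self _
      _ ≤ _ := hle
      _ = _ := by ring
  have hb0 : 0 < b := by linarith
  have hlim : Filter.Tendsto (fun N : ℕ => C * V * (a / b) ^ N) Filter.atTop (nhds (C * V * 0)) :=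
    (tendsto_pow_atTop_nhds_zero_of_lt_one (by positivity) ((div_lt_one hb0).2 hab)).const_mul _
  rw [mul_zero] at hlim
  obtain ⟨N, hN⟩ := (hlim.eventually (gt_mem_nhds hv)).exists
  have := key N
  rw [div_pow, ← mul_div_assoc, div_lt_iff₀ (by positivity)] at hN
  linarith

theorem aux_zero_cont (h : E → E) (hc : Continuous h) (R : ℝ) (hR0 : 0 < R)
    (hR : ∀ x, R ≤ ‖x‖ → h x = 0) : ∃ x, x + h x = 0 := by
  by_contra! hne
  have hcF : Continuous fun x => ‖x + h x‖ := by fun_prop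
  have hB : IsCompact (Metric.closedBall (0 : E) R) := isCompact_closedBall _ _
  have hBne : (Metric.closedBall (0 : E) R).Nonempty := ⟨0, by simp [hR0.le]⟩
  obtain ⟨x0, -, hx0⟩ := hB.exists_isMinOn hBne hcF.continuousOn
  obtain ⟨g, hg, hgd, hgs⟩ := hc.exists_contDiff_approx 1 (ε := fun _ => ‖x0 + h x0‖)
    continuous_const (fun _ => norm_pos_iff.2 (hne x0))
  have hgR : ∀ x, R ≤ ‖x‖ → g x = 0 := by
    intro x hx
    by_contra hgx
    exact hgs hgx (hR x hx)
  obtain ⟨x, hx⟩ := aux_zero g hg R hR0 hgR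
  rcases le_or_gt R ‖x‖ with h1 | h1
  · rw [hgR x h1, add_zero] at hx
    rw [hx, norm_zero] at h1
    linarith
  · have h2 : ‖x0 + h x0‖ ≤ ‖x + h x‖ := hx0 (by simpa using h1.le)
    have h3 := hgd x
    have h4 : x + h x = h x - g x := by
      have h5 : x + h x = (x + g x) + (h x - g x) := by abel
      rw [h5, hx, zero_add]
    rw [h4, ← dist_eq_norm, dist_comm] at h2
    linarith

theorem aux_surj_bdd (h : E → E) (hc : Continuous h) (K : ℝ) (hK : ∀ x, ‖h x‖ ≤ K) (w : E) :
    ∃ x, x + h x = w := by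
  have hK0 : 0 ≤ K := (norm_nonneg _).trans (hK 0)
  set K' := K + ‖w‖ + 1 with hK'
  have hKp : 0 < K' := by positivity
  let χ : E → ℝ := fun x => max 0 (min 1 (2 - ‖x‖ / K'))
  have hχc : Continuous χ := by fun_prop
  have hχ0 : ∀ x, 0 ≤ χ x := fun x => le_max_left _ _
  have hχ1 : ∀ x, χ x ≤ 1 := fun x => max_le zero_le_one (min_le_left _ _)
  obtain ⟨x, hx⟩ := aux_zero_cont (fun x => χ x • (h x - w)) (by fun_prop) (2 * K') (by positivity)
    (by
      intro x hx
      have : 2 ≤ ‖x‖ / K' := by rwa [le_div_iff₀ hKp]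
      have : χ x = 0 := max_eq_left ((min_le_right _ _).trans (by linarith))
      simp [this])
  have hxn : ‖x‖ ≤ K' := by
    rw [eq_neg_of_add_eq_zero_left hx, norm_neg, norm_smul, Real.norm_of_nonneg (hχ0 x)]
    have h1 : ‖h x - w‖ ≤ K' := (norm_sub_le _ _).trans (by have := hK x; linarith)
    calc _ ≤ 1 * K' := mul_le_mul (hχ1 x) h1 (norm_nonneg _) zero_le_one
      _ = _ := one_mul _
  have hχx : χ x = 1 := by
    have : ‖x‖ / K' ≤ 1 := (div_le_one hKp).2 hxn
    simp only [χ]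
    rw [min_eq_left (by linarith), max_eq_right zero_le_one]
  simp only [hχx, one_smul] at hx
  refine ⟨x, ?_⟩
  rw [← add_sub_assoc] at hx
  exact sub_eq_zero.1 hx

theorem aux_closedEmb_surj (f : E → E) (hf : Topology.IsClosedEmbedding f) :
    Function.Surjective f := by
  by_contra hns
  simp only [Function.Surjective, not_forall, not_exists] at hns
  obtain ⟨c, hcf⟩ := hns
  have : TietzeExtension E := TietzeExtension.of_tvs ℝ
  obtain ⟨G, hG⟩ := ContinuousMap.exists_extension' hf (ContinuousMap.id E)
  have hGf : ∀ x, G (f x) = x := fun x => congrFun hG x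
  have hfc := hf.continuous
  have hpos : ∀ x, 0 < ‖f x - c‖ := fun x => norm_pos_iff.2 (sub_ne_zero.2 (hcf x))
  set ε := 2 * ‖f 0 - c‖ with hε
  have hε0 : 0 < ε := by have := hpos 0; positivity
  -- points near zero are mapped into the ball
  obtain ⟨δ, hδ, hδ'⟩ : ∃ δ > 0, ∀ x, ‖x‖ < δ → ‖f x - c‖ < ε := by
    have : ∀ᶠ x in nhds (0 : E), ‖f x - c‖ < ε := by
      have hcc : Continuous fun x => ‖f x - c‖ := by fun_prop
      refine hcc.continuousAt.eventually_lt continuousAt_const ?_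
      have := hpos 0
      linarith
    obtain ⟨δ, hδ, h⟩ := Metric.eventually_nhds_iff.1 this
    exact ⟨δ, hδ, fun x hx => h (by simpa using hx)⟩
  obtain ⟨P, hP, hPd, -⟩ := G.continuous.exists_contDiff_approx 1 (ε := fun _ => δ / 2)
    continuous_const (fun _ => by positivity)
  have hnull : volume (P '' Metric.sphere c ε) = 0 :=
    addHaar_image_eq_zero_of_differentiableOn_of_addHaar_eq_zero volume
      (hP.differentiable one_ne_zero).differentiableOn
      (Measure.addHaar_sphere_of_ne_zero volume c hε0.ne')
  obtain ⟨v, hvb, hvP⟩ : ∃ v ∈ Metric.ball (0 : E) (δ / 2), v ∉ P '' Metric.sphere c ε := by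
    by_contra! hcon
    have h1 : volume (Metric.ball (0 : E) (δ / 2)) ≤ 0 := hnull ▸ measure_mono hcon
    exact absurd h1 (not_le.2 (Metric.measure_ball_pos volume 0 (by positivity)))
  have hvn : ‖v‖ < δ / 2 := by simpa using hvb
  let Φ : E → E := fun x => c + (max (ε / ‖f x - c‖) 1) • (f x - c)
  have hΦc : Continuous Φ := by
    have : Continuous fun x => ε / ‖f x - c‖ :=
      continuous_const.div (by fun_prop) (fun x => (hpos x).ne')
    fun_prop
  have hΦ1 : ∀ x, ε ≤ ‖f x - c‖ → Φ x = f x := by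
    intro x hx
    have : ε / ‖f x - c‖ ≤ 1 := (div_le_one (hpos x)).2 hx
    simp [Φ, max_eq_right this]
  have hΦ2 : ∀ x, ‖f x - c‖ ≤ ε → Φ x ∈ Metric.sphere c ε := by
    intro x hx
    have : 1 ≤ ε / ‖f x - c‖ := (one_le_div (hpos x)).2 hx
    have h0 := hpos x
    simp only [Φ, max_eq_left this, mem_sphere_iff_norm, add_sub_cancel_left, norm_smul]
    rw [Real.norm_of_nonneg (by positivity)]
    field_simp
  have hPc : Continuous P := hP.continuous
  -- the perturbed left inverse
  have hne : ∀ x, P (Φ x) ≠ v := by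
    intro x hx
    rcases le_total ‖f x - c‖ ε with h1 | h1
    · exact hvP ⟨Φ x, hΦ2 x h1, hx⟩
    · have h2 := hPd (f x)
      rw [← hΦ1 x h1, hx, hΦ1 x h1, hGf, dist_eq_norm] at h2
      have h3 : δ ≤ ‖x‖ := by
        by_contra! h4
        exact absurd (hδ' x h4) (not_lt.2 h1)
      have h5 : ‖x‖ ≤ ‖v‖ + ‖v - x‖ := by
        have := norm_sub_le v (v - x)
        simpa using this
      linarith
  obtain ⟨K, hK⟩ := (isCompact_closedBall c ε).exists_bound_of_continuousOn
    (f := fun y => P y) hPc.continuousOn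
  obtain ⟨K', hK'⟩ := (isCompact_closedBall c ε).exists_bound_of_continuousOn
    (f := fun y => G y) G.continuous.continuousOn
  obtain ⟨x, hx⟩ := aux_surj_bdd (fun x => P (Φ x) - x) (by fun_prop) (max (δ / 2) (K + K'))
    (by
      intro x
      rcases le_total ‖f x - c‖ ε with h1 | h1
      · refine le_trans ?_ (le_max_right _ _)
        have h2 := hK (Φ x) (Metric.sphere_subset_closedBall (hΦ2 x h1))
        have h3 := hK' (f x) (by simpa [dist_eq_norm] using h1)
        rw [hGf] at h3
        exact (norm_sub_le _ _).trans (add_le_add h2 h3)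
      · refine le_trans ?_ (le_max_left _ _)
        have h2 := hPd (f x)
        rw [hGf, dist_eq_norm] at h2
        simp only [hΦ1 x h1]
        exact h2.le) v
  exact hne x (by simpa using hx)

end Brouwer

theorem aux_pi_surj {n : ℕ} (f : (Fin n → ℝ) → (Fin n → ℝ)) (hf : Topology.IsClosedEmbedding f) :
    Function.Surjective f := by
  let e : EuclideanSpace ℝ (Fin n) ≃ₜ (Fin n → ℝ) :=
    (EuclideanSpace.equiv (Fin n) ℝ).toHomeomorph
  have h := aux_closedEmb_surj (fun x => e.symm (f (e x)))
    (e.symm.isClosedEmbedding.comp (hf.comp e.isClosedEmbedding))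
  intro y
  obtain ⟨x, hx⟩ := h (e.symm y)
  exact ⟨e x, e.symm.injective hx⟩

theorem aux_tProd_cont {n k : ℕ} (A : Fin n → (Fin k → Fin n) → ℝ) (i : Fin n) :
    Continuous fun x => tProd A x i := by
  unfold tProd
  fun_prop

theorem aux_tProd_smul {n k : ℕ} (A : Fin n → (Fin k → Fin n) → ℝ) (t : ℝ) (x : Fin n → ℝ)
    (i : Fin n) : tProd A (t • x) i = t ^ k * tProd A x i := by
  simp only [tProd, Pi.smul_apply, smul_eq_mul, Finset.prod_mul_distrib, Finset.prod_const,
    Finset.card_univ, Fintype.card_fin, Finset.mul_sum]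
  refine Finset.sum_congr rfl fun f _ => by ring

theorem aux_inj {n k : ℕ} (A1 A2 : Fin n → (Fin k → Fin n) → ℝ) (hS : StrongVP A1 A2)
    (q1 q2 : Fin n → ℝ) : Function.Injective
      (fun x i => min (q1 i + tProd A1 x i) (q2 i + tProd A2 x i)) := by
  intro x y hxy
  by_contra hne
  obtain ⟨i, hi⟩ := hS x y hne
  have h := congrFun hxy i
  simp only at h
  rcases pos_and_pos_or_neg_and_neg_of_mul_pos hi with ⟨h1, h2⟩ | ⟨h1, h2⟩
  · have := min_lt_min (show q1 i + tProd A1 y i < q1 i + tProd A1 x i by linarith)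
      (show q2 i + tProd A2 y i < q2 i + tProd A2 x i by linarith)
    linarith
  · have := min_lt_min (show q1 i + tProd A1 x i < q1 i + tProd A1 y i by linarith)
      (show q2 i + tProd A2 x i < q2 i + tProd A2 y i by linarith)
    linarith

theorem aux_surj {n k : ℕ} (hk : k ≠ 0) (hn : 1 ≤ n) (A1 A2 : Fin n → (Fin k → Fin n) → ℝ)
    (hS : StrongVP A1 A2) (q1 q2 : Fin n → ℝ) : Function.Surjective
      (fun x i => min (q1 i + tProd A1 x i) (q2 i + tProd A2 x i)) := by
  set H : (Fin n → ℝ) → (Fin n → ℝ) :=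
    fun x i => min (q1 i + tProd A1 x i) (q2 i + tProd A2 x i) with hH
  let H0 : (Fin n → ℝ) → (Fin n → ℝ) := fun x i => min (tProd A1 x i) (tProd A2 x i)
  have hc1 := aux_tProd_cont A1
  have hc2 := aux_tProd_cont A2
  have hHc : Continuous H := by
    refine continuous_pi fun i => ?_
    exact (continuous_const.add (hc1 i)).min (continuous_const.add (hc2 i))
  have hH0c : Continuous H0 := by
    refine continuous_pi fun i => ?_
    exact (hc1 i).min (hc2 i)
  have hHinj : Function.Injective H := aux_inj A1 A2 hS q1 q2
  have hH0inj : Function.Injective H0 := by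
    have := aux_inj A1 A2 hS 0 0
    simpa using this
  have hhom : ∀ (t : ℝ), 0 ≤ t → ∀ x, H0 (t • x) = t ^ k • H0 x := by
    intro t ht x
    ext i
    simp only [H0, aux_tProd_smul, Pi.smul_apply, smul_eq_mul]
    rw [mul_min_of_nonneg _ _ (pow_nonneg ht k)]
  have hH00 : H0 0 = 0 := by
    have := hhom 0 le_rfl 0
    simpa [hk] using this
  have : NeZero n := ⟨by omega⟩
  obtain ⟨x0, hx0, hmin⟩ := (isCompact_sphere (0 : Fin n → ℝ) 1).exists_isMinOn
    (NormedSpace.sphere_nonempty.2 zero_le_one) hH0c.norm.continuousOn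
  set c := ‖H0 x0‖ with hc
  have hcpos : 0 < c := by
    rw [hc, norm_pos_iff]
    intro h
    have : x0 = 0 := hH0inj (h.trans hH00.symm)
    simp [this] at hx0
  have hlow : ∀ x, 1 ≤ ‖x‖ → c * ‖x‖ ≤ ‖H0 x‖ := by
    intro x hx
    have hxp : 0 < ‖x‖ := by linarith
    have h1 : c ≤ ‖H0 (‖x‖⁻¹ • x)‖ := hmin (by
      simp [norm_smul, hxp.ne'])
    have h2 : H0 x = ‖x‖ ^ k • H0 (‖x‖⁻¹ • x) := by
      rw [← hhom _ hxp.le, smul_smul, mul_inv_cancel₀ hxp.ne', one_smul]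
    rw [h2, norm_smul, norm_pow, norm_norm, mul_comm]
    exact mul_le_mul (le_self_pow₀ hx hk) h1 hcpos.le (by positivity)
  have hdiff : ∀ x, ‖H0 x‖ ≤ ‖H x‖ + (‖q1‖ + ‖q2‖) := by
    intro x
    have h1 : ‖H x - H0 x‖ ≤ ‖q1‖ + ‖q2‖ := by
      refine (pi_norm_le_iff_of_nonneg (by positivity)).2 fun i => ?_
      have e1 := norm_le_pi_norm q1 i
      have e2 := norm_le_pi_norm q2 i
      have e3 := abs_min_sub_min_le_max (q1 i + tProd A1 x i) (q2 i + tProd A2 x i)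
        (tProd A1 x i) (tProd A2 x i)
      simp only [add_sub_cancel_right] at e3
      refine (show ‖(H x - H0 x) i‖ ≤ _ from e3).trans (max_le ?_ ?_)
      · exact e1.trans (by linarith [norm_nonneg q2])
      · exact e2.trans (by linarith [norm_nonneg q1])
    have h2 := norm_sub_le (H x) (H x - H0 x)
    rw [sub_sub_cancel] at h2
    linarith
  have hprop : IsProperMap H := by
    rw [isProperMap_iff_tendsto_cocompact]
    refine ⟨hHc, Filter.tendsto_cocompact_cocompact_of_norm fun ε => ?_⟩
    refine ⟨max 1 ((ε + (‖q1‖ + ‖q2‖)) / c), fun x hx => ?_⟩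
    have h1 := hlow x ((le_max_left _ _).trans hx.le)
    have h2 := (le_max_right _ _).trans_lt hx
    rw [div_lt_iff₀ hcpos] at h2
    have h3 := hdiff x
    linarith
  exact aux_pi_surj H
    (Topology.IsClosedEmbedding.of_continuous_injective_isClosedMap hHc hHinj hprop.isClosedMap)

theorem stmt_14 {m n : ℕ} (hm : 2 < m) (hn : 1 ≤ n)
    (A1 A2 : Fin n → (Fin (m - 1) → Fin n) → ℝ)
    (hSVP : StrongVP A1 A2) (hR : RTensor A2) :
    ∀ q1 q2 : Fin n → ℝ, ∃! x : Fin n → ℝ, VTCPSol A1 A2 q1 q2 x := by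
  intro q1 q2
  have key : ∀ x, VTCPSol A1 A2 q1 q2 x ↔
      (fun i => min (q1 i + tProd A1 x i) (q2 i + tProd A2 x i)) = (0 : Fin n → ℝ) := by
    intro x
    constructor
    · rintro ⟨h1, h2, h3⟩
      rw [Finset.sum_eq_zero_iff_of_nonneg (fun i _ => mul_nonneg (h1 i) (h2 i))] at h3
      ext i
      rcases mul_eq_zero.1 (h3 i (Finset.mem_univ i)) with h | h
      · simp [h, h2 i]
      · simp [h, h1 i]
    · intro h
      have h' : ∀ i, min (q1 i + tProd A1 x i) (q2 i + tProd A2 x i) = 0 := congrFun h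
      refine ⟨fun i => (h' i).symm.le.trans (min_le_left _ _),
        fun i => (h' i).symm.le.trans (min_le_right _ _), Finset.sum_eq_zero fun i _ => ?_⟩
      rcases min_choice (q1 i + tProd A1 x i) (q2 i + tProd A2 x i) with h2 | h2
      · rw [← h2, h' i, zero_mul]
      · rw [mul_eq_zero]; right; rw [← h2, h' i]
  obtain ⟨x, hx⟩ := aux_surj (by omega) hn A1 A2 hSVP q1 q2 0
  refine ⟨x, (key x).2 hx, fun y hy => ?_⟩
  exact aux_inj A1 A2 hSVP q1 q2 (((key y).1 hy).trans hx.symm)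
end
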